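/- For every complex number q with |q| < 1 and every complex number x, the identity 2·∑_{n=0}^∞ T_{2n+1}(x/2)·q^{n²+n} = (∏_{m=1}^∞ (1 − q^{2m}))³ · ∑_{k=0}^∞ A_k(q²)·x^{2k+1} holds, where both sides converge absolutely. -/

import Mathlib

/-- MacMahon's generalized sum-of-divisors function `A_k(q)`, defined as the sum over all
strictly increasing `k`-tuples of positive integers. -/
noncomputable def macA (k : ℕ) (q : ℂ) : ℂ :=
  ∑' m : {m : Fin k → ℕ // StrictMono m ∧ ∀ i, 0 < m i},
    q ^ (∑ i, m.1 i) / ∏ i, (1 - q ^ m.1 i) ^ 2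

/-!
Write `2 T_{2n+1}(x/2) = C_{2n+1}(x)`, where the Chebyshev polynomials `C_n` are normalised by
`C_n(z + 1/z) = z^n + z^{-n}`, and put `Q = q²`. For `x = z + 1/z` the factor `(1 - Q^m)² + x² Q^m`
equals `(1 + z² Q^m)(1 + z⁻² Q^m)`, so the series in the `C_{2n+1}(x)` is a Jacobi triple product.
Its finite form expands `x ∏_{m ≤ N} ((1 - Q^m)² + x² Q^m)` in the `C_{2n+1}(x)`, with Gaussian
binomials in the coefficients; it follows by induction on `N` from
`C_{2n+3} + C_{2n-1} = (x² - 2) C_{2n+1}`, and dominated convergence gives the limit `N → ∞`.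
Dividing each factor by `(1 - Q^m)²` leaves `1 + x² Q^m/(1 - Q^m)²`, and multiplying out the product
of these yields the generating function of the `A_k(Q)`.
-/

open Filter Finset Polynomial Topology

section GaussBinom

variable {R : Type*}

/-- The Gaussian binomial coefficient `[n choose k]_Q`, defined by its Pascal recursion rather than
as a quotient of `Q`-factorials so that no division is needed. -/
def gaussBinom [Semiring R] (Q : R) : ℕ → ℕ → R
  | _, 0 => 1
  | 0, _ + 1 => 0
  | n + 1, k + 1 => gaussBinom Q n k + Q ^ (k + 1) * gaussBinom Q n (k + 1)

section CommSemiring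

variable [CommSemiring R] (Q : R)

@[simp]
lemma gaussBinom_zero_right (n : ℕ) : gaussBinom Q n 0 = 1 := by
  cases n <;> rfl

lemma gaussBinom_succ_succ (n k : ℕ) :
    gaussBinom Q (n + 1) (k + 1) = gaussBinom Q n k + Q ^ (k + 1) * gaussBinom Q n (k + 1) :=
  rfl

lemma gaussBinom_eq_zero_of_lt {n k : ℕ} (h : n < k) : gaussBinom Q n k = 0 := by
  induction n generalizing k with
  | zero => obtain ⟨k, rfl⟩ := Nat.exists_eq_succ_of_ne_zero h.ne'; rfl
  | succ n ih =>
    obtain ⟨k, rfl⟩ := Nat.exists_eq_add_of_lt (Nat.zero_lt_of_lt h)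
    rw [zero_add, gaussBinom_succ_succ, ih (by lia), ih (by lia), mul_zero, add_zero]

@[simp]
lemma gaussBinom_self (n : ℕ) : gaussBinom Q n n = 1 := by
  induction n with
  | zero => rfl
  | succ n ih => rw [gaussBinom_succ_succ, ih, gaussBinom_eq_zero_of_lt Q n.lt_succ_self]; simp

-- For `n < k` the truncated exponent `n - k` is harmless, since `gaussBinom Q n k = 0`.
lemma gaussBinom_succ_succ' (n k : ℕ) :
    gaussBinom Q (n + 1) (k + 1) = gaussBinom Q n (k + 1) + Q ^ (n - k) * gaussBinom Q n k := by
  induction n generalizing k with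
  | zero => cases k <;> simp [gaussBinom]
  | succ n ih =>
    rcases lt_trichotomy (n + 1) k with hk | rfl | hk
    · simp [gaussBinom_eq_zero_of_lt Q, hk, hk.trans]
    · simp [gaussBinom_eq_zero_of_lt Q]
    obtain _ | k := k
    · have h := ih 0
      calc gaussBinom Q (n + 1 + 1) 1 = 1 + Q * (gaussBinom Q n 1 + Q ^ n) := by
            simp [gaussBinom_succ_succ Q (n + 1), h]
        _ = 1 + Q * gaussBinom Q n 1 + Q ^ (n + 1) := by ring
        _ = _ := by simp [gaussBinom_succ_succ Q n]
    obtain ⟨j, rfl⟩ := Nat.exists_eq_add_of_lt (Nat.lt_of_succ_lt_succ hk)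
    have h₁ := ih k
    have h₂ := ih (k + 1)
    rw [show k + j + 1 - k = j + 1 by lia] at h₁
    rw [show k + j + 1 - (k + 1) = j by lia] at h₂
    rw [show k + j + 1 + 1 - (k + 1) = j + 1 by lia]
    set G := gaussBinom Q (k + j + 1)
    calc gaussBinom Q (k + j + 1 + 1 + 1) (k + 1 + 1)
        = G (k + 1) + Q ^ (j + 1) * G k + Q ^ (k + 2) * (G (k + 2) + Q ^ j * G (k + 1)) := by
          rw [gaussBinom_succ_succ, h₁, h₂]
      _ = G (k + 1) + Q ^ (k + 2) * G (k + 2) + Q ^ (j + 1) * (G k + Q ^ (k + 1) * G (k + 1)) := by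
          ring
      _ = _ := by rw [gaussBinom_succ_succ Q _ (k + 1), gaussBinom_succ_succ Q (k + j + 1) k]

lemma gaussBinom_symm (m n : ℕ) : gaussBinom Q (m + n) m = gaussBinom Q (m + n) n := by
  induction h : m + n generalizing m n with
  | zero => simp_all
  | succ s ih =>
    obtain _ | m := m
    · simp_all
    obtain _ | n := n
    · simp_all
    rw [gaussBinom_succ_succ, gaussBinom_succ_succ', ih m (n + 1) (by lia),
      ih (m + 1) n (by lia), show s - n = m + 1 by lia]

lemma gaussBinom_add_two (n k : ℕ) :
    gaussBinom Q (n + 2) (k + 2) = (1 + Q ^ (n + 1)) * gaussBinom Q n (k + 1) +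
      Q ^ (k + 2) * gaussBinom Q n (k + 2) + Q ^ (n - k) * gaussBinom Q n k := by
  have key : Q ^ (k + 2) * (Q ^ (n - (k + 1)) * gaussBinom Q n (k + 1)) =
      Q ^ (n + 1) * gaussBinom Q n (k + 1) := by
    obtain h | h := lt_or_ge n (k + 1)
    · simp [gaussBinom_eq_zero_of_lt Q h]
    · rw [← mul_assoc, ← pow_add, show k + 2 + (n - (k + 1)) = n + 1 by lia]
  rw [gaussBinom_succ_succ, gaussBinom_succ_succ' Q n k, gaussBinom_succ_succ' Q n (k + 1), mul_add,
    key]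
  ring

/-- The coefficient of the Chebyshev polynomial `C (2 * n + 1)` in the expansion of
`x ∏_{m ≤ N} ((1 - Q^m)² + x² Q^m)`. The Gaussian binomial has lower index `N + 1 + n` instead of
the symmetric `N - n`, so that it vanishes for `N < n` without truncation. -/
def thetaCoeff (N n : ℕ) : R := gaussBinom Q (2 * N + 1) (N + 1 + n) * Q ^ (n + 1).choose 2

lemma thetaCoeff_eq_zero_of_lt {N n : ℕ} (h : N < n) : thetaCoeff Q N n = 0 := by
  rw [thetaCoeff, gaussBinom_eq_zero_of_lt Q (by lia), zero_mul]

-- At `n = 0` the truncation `n - 1 = 0` is intended: it is the reflection `-1 ↦ 0` coming from the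
-- symmetry of the Gaussian binomials, as is `C (-1) = C 1` in `eval_C_odd_succ_add_pred` below.
lemma thetaCoeff_succ (N n : ℕ) :
    thetaCoeff Q (N + 1) n = (1 + Q ^ (2 * N + 2)) * thetaCoeff Q N n +
      Q ^ (N + 1) * (thetaCoeff Q N (n - 1) + thetaCoeff Q N (n + 1)) := by
  have htri (k : ℕ) : (k + 1 + 1).choose 2 = k + 1 + (k + 1).choose 2 := by
    rw [Nat.choose_succ_succ' (k + 1) 1, Nat.choose_one_right]
  obtain hn | hn := lt_or_ge (N + 1) n
  · simp only [thetaCoeff_eq_zero_of_lt Q, hn, Nat.lt_of_succ_lt hn, show N < n - 1 by lia,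
      show N < n + 1 by lia, mul_zero, add_zero]
  have hrec := gaussBinom_add_two Q (2 * N + 1) (N + n)
  obtain _ | n := n
  · have hsymm := gaussBinom_symm Q N (N + 1)
    rw [show N + (N + 1) = 2 * N + 1 by lia] at hsymm
    rw [show 2 * N + 1 - (N + 0) = N + 1 by lia, add_zero, hsymm] at hrec
    simp only [thetaCoeff, show 2 * (N + 1) + 1 = 2 * N + 1 + 2 by lia, add_zero, zero_add, hrec,
      pow_zero, Nat.zero_sub, Nat.choose_succ_self, Nat.reduceAdd, Nat.choose_self, pow_one]
    ring
  · obtain ⟨j, rfl⟩ := Nat.exists_eq_add_of_le (Nat.le_of_succ_le_succ hn)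
    rw [show 2 * (n + j) + 1 - (n + j + (n + 1)) = j by lia] at hrec
    simp only [thetaCoeff, Nat.add_sub_cancel, htri]
    rw [show 2 * (n + j + 1) + 1 = 2 * (n + j) + 1 + 2 by lia]
    simp only [show ∀ a, n + j + 1 + 1 + a = n + j + a + 2 by lia,
      show n + j + 1 + n = n + j + (n + 1) by lia,
      show n + j + 1 + (n + 1) = n + j + (n + 1) + 1 by lia,
      show n + j + 1 + (n + 1 + 1) = n + j + (n + 1) + 2 by lia]
    rw [hrec]
    ring

end CommSemiring

variable [CommRing R] (Q : R)

/-- The finite `q`-Pochhammer symbol `(Q; Q)_n`. -/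
def qPochhammer (n : ℕ) : R := ∏ i ∈ range n, (1 - Q ^ (i + 1))

lemma qPochhammer_succ (n : ℕ) :
    qPochhammer Q (n + 1) = qPochhammer Q n * (1 - Q ^ (n + 1)) :=
  prod_range_succ ..

lemma gaussBinom_mul_qPochhammer (m n : ℕ) :
    gaussBinom Q (m + n) n * (qPochhammer Q m * qPochhammer Q n) = qPochhammer Q (m + n) := by
  induction h : m + n generalizing m n with
  | zero => obtain ⟨rfl, rfl⟩ := Nat.add_eq_zero_iff.1 h; simp [qPochhammer]
  | succ s ih =>
    obtain _ | m := m
    · obtain rfl : n = s + 1 := by lia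
      simp [qPochhammer]
    obtain _ | n := n
    · obtain rfl : m = s := by lia
      simp [qPochhammer]
    obtain rfl : s = m + n + 1 := by lia
    have h₁ := ih (m + 1) n (by lia)
    have h₂ := ih m (n + 1) (by lia)
    rw [qPochhammer_succ] at h₁ h₂
    rw [gaussBinom_succ_succ]
    simp only [qPochhammer_succ] at h₁ h₂ ⊢
    linear_combination (1 - Q ^ (n + 1)) * h₁ + Q ^ (n + 1) * (1 - Q ^ (m + 1)) * h₂

lemma sum_range_mul_add_pred (d t : ℕ → R) (M : ℕ) :
    ∑ n ∈ range M, d n * (t (n + 1) + t (n - 1)) + d M * t (M - 1) =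
      ∑ n ∈ range M, (d (n - 1) + d (n + 1)) * t n + d (M - 1) * t M := by
  induction M with
  | zero => simp
  | succ M ih =>
    simp only [sum_range_succ, Nat.add_sub_cancel]
    linear_combination ih

lemma eval_C_odd_succ_add_pred (x : R) (n : ℕ) :
    (Chebyshev.C R (2 * ↑(n + 1) + 1)).eval x + (Chebyshev.C R (2 * ↑(n - 1) + 1)).eval x =
      (x ^ 2 - 2) * (Chebyshev.C R (2 * n + 1)).eval x := by
  have hpred : Chebyshev.C R (2 * ↑(n - 1) + 1) = Chebyshev.C R (2 * n + 1 - 2) := by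
    obtain _ | n := n
    · norm_num
    · congr 1; push_cast [Nat.add_sub_cancel]; ring
  have hmul := congrArg (eval x) (Chebyshev.C_mul_C R (2 * n + 1) 2)
  rw [hpred, show (2 * ((n + 1 : ℕ) : ℤ) + 1) = 2 * n + 1 + 2 by push_cast; ring]
  simp only [Chebyshev.C_two, eval_mul, eval_add, eval_sub, eval_pow, eval_X, eval_ofNat] at hmul
  linear_combination -hmul

lemma sum_thetaCoeff_mul_eval_C (x : R) {N M : ℕ} (hM : N < M) :
    ∑ n ∈ range M, thetaCoeff Q N n * (Chebyshev.C R (2 * n + 1)).eval x =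
      x * ∏ m ∈ range N, ((1 - Q ^ (m + 1)) ^ 2 + x ^ 2 * Q ^ (m + 1)) := by
  induction N with
  | zero =>
    rw [sum_eq_single_of_mem 0 (mem_range.2 hM)]
    · simp [thetaCoeff]
    · intro n _ hn
      rw [thetaCoeff_eq_zero_of_lt Q (Nat.pos_of_ne_zero hn), zero_mul]
  | succ N ih =>
    set t : ℕ → R := fun n ↦ (Chebyshev.C R (2 * n + 1)).eval x
    have hparts : (x ^ 2 - 2) * ∑ n ∈ range M, thetaCoeff Q N n * t n =
        ∑ n ∈ range M, (thetaCoeff Q N (n - 1) + thetaCoeff Q N (n + 1)) * t n := by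
      have h := sum_range_mul_add_pred (thetaCoeff Q N) t M
      rw [thetaCoeff_eq_zero_of_lt Q (show N < M by lia),
        thetaCoeff_eq_zero_of_lt Q (show N < M - 1 by lia)] at h
      simp only [zero_mul, add_zero] at h
      rw [← h, mul_sum]
      refine sum_congr rfl fun n _ ↦ ?_
      rw [eval_C_odd_succ_add_pred, mul_left_comm]
    calc ∑ n ∈ range M, thetaCoeff Q (N + 1) n * t n
        = (1 + Q ^ (2 * N + 2)) * ∑ n ∈ range M, thetaCoeff Q N n * t n + Q ^ (N + 1) *
            ∑ n ∈ range M, (thetaCoeff Q N (n - 1) + thetaCoeff Q N (n + 1)) * t n := by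
          rw [mul_sum, mul_sum, ← sum_add_distrib]
          refine sum_congr rfl fun n _ ↦ ?_
          rw [thetaCoeff_succ]
          ring
      _ = ((1 - Q ^ (N + 1)) ^ 2 + x ^ 2 * Q ^ (N + 1)) *
            ∑ n ∈ range M, thetaCoeff Q N n * t n := by
          rw [← hparts]
          ring
      _ = _ := by
          rw [ih (by lia), prod_range_succ]
          ring

end GaussBinom

/-- Strictly increasing `k`-tuples of positive integers correspond to `k`-element sets of positive
integers. -/
def strictMonoPosEquivPowersetCard (k : ℕ) :
    {m : Fin k → ℕ // StrictMono m ∧ ∀ i, 0 < m i} ≃ Set.powersetCard ℕ+ k :=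
  let e : {m : Fin k → ℕ // StrictMono m ∧ ∀ i, 0 < m i} ≃ (Fin k ↪o ℕ+) :=
    { toFun := fun m ↦ OrderEmbedding.ofStrictMono (fun i ↦ ⟨m.1 i, m.2.2 i⟩) m.2.1
      invFun := fun f ↦ ⟨fun i ↦ f i, f.strictMono, fun i ↦ (f i).pos⟩ }
  e.trans Set.powersetCard.ofFinEmbEquiv

lemma macA_eq_tsum_powersetCard (k : ℕ) (q : ℂ) :
    macA k q = ∑' s : Set.powersetCard ℕ+ k, ∏ m ∈ s.val, q ^ (m : ℕ) / (1 - q ^ (m : ℕ)) ^ 2 := by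
  rw [macA, ← (strictMonoPosEquivPowersetCard k).tsum_eq]
  refine tsum_congr fun m ↦ ?_
  rw [strictMonoPosEquivPowersetCard, Equiv.trans_apply, Set.powersetCard.ofFinEmbEquiv_apply,
    Set.powersetCard.val_ofFinEmb, prod_map, prod_div_distrib, prod_pow_eq_pow_sum]
  rfl

section

variable {R ι : Type*} [NormedCommRing R] [NormOneClass R] [CompleteSpace R]

lemma hasSum_tsum_powersetCard_mul_pow {f : ι → R} (hf : Summable fun i ↦ ‖f i‖) (y : R) :
    HasSum (fun k ↦ (∑' s : Set.powersetCard ι k, ∏ i ∈ s.val, f i) * y ^ k)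
      (∏' i, (1 + f i * y)) := by
  have hfy : Summable fun i ↦ ‖f i * y‖ :=
    .of_nonneg_of_le (fun _ ↦ norm_nonneg _) (fun i ↦ norm_mul_le (f i) y) (hf.mul_right ‖y‖)
  have hsum := summable_finsetProd_of_summable_norm hfy
  rw [tprod_one_add hsum]
  have hfiber := Set.powersetCard.prodEquiv.hasSum_iff.2 hsum.hasSum
  refine (hfiber.sigma fun k ↦ (hfiber.summable.sigma_factor k).hasSum).congr_fun fun k ↦ ?_
  have hk : Summable fun s : Set.powersetCard ι k ↦ ∏ i ∈ s.val, f i :=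
    (summable_finsetProd_of_summable_norm hf).subtype _
  rw [← hk.tsum_mul_right]
  refine tsum_congr fun s ↦ ?_
  simp [prod_mul_distrib]

end

section Analysis

variable {𝕜 : Type*} [NormedField 𝕜] {Q : 𝕜}

lemma one_sub_pow_succ_ne_zero (hQ : ‖Q‖ < 1) (n : ℕ) : 1 - Q ^ (n + 1) ≠ 0 := fun h ↦ by
  have hlt : ‖Q ^ (n + 1)‖ < 1 := by
    rw [norm_pow]
    exact pow_lt_one₀ (norm_nonneg Q) hQ n.succ_ne_zero
  rw [← sub_eq_zero.1 h, norm_one] at hlt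
  exact hlt.false

lemma qPochhammer_ne_zero (hQ : ‖Q‖ < 1) (n : ℕ) : qPochhammer Q n ≠ 0 :=
  prod_ne_zero_iff.2 fun i _ ↦ one_sub_pow_succ_ne_zero hQ i

lemma summable_norm_pow_succ (hQ : ‖Q‖ < 1) : Summable fun n : ℕ ↦ ‖Q ^ (n + 1)‖ :=
  (summable_nat_add_iff (f := fun n ↦ ‖Q ^ n‖) 1).2 (summable_norm_geometric_of_norm_lt_one hQ)

lemma summable_norm_pow_succ_div_one_sub_sq (hQ : ‖Q‖ < 1) :
    Summable fun n : ℕ ↦ ‖Q ^ (n + 1) / (1 - Q ^ (n + 1)) ^ 2‖ := by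
  have hpow : Tendsto (fun n : ℕ ↦ Q ^ (n + 1)) cofinite (𝓝 0) := by
    rw [Nat.cofinite_eq_atTop]
    exact (tendsto_pow_atTop_nhds_zero_of_norm_lt_one hQ).comp (tendsto_add_atTop_nat 1)
  have hlim : Tendsto (fun n : ℕ ↦ ‖((1 - Q ^ (n + 1)) ^ 2)⁻¹‖) cofinite
      (𝓝 ‖((1 - (0 : 𝕜)) ^ 2)⁻¹‖) :=
    (((hpow.const_sub 1).pow 2).inv₀ (by simp)).norm
  simp only [div_eq_mul_inv, norm_mul]
  exact Summable.mul_tendsto_const (by simpa using summable_norm_pow_succ hQ) hlim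

lemma gaussBinom_add_eq_div (hQ : ‖Q‖ < 1) (m n : ℕ) :
    gaussBinom Q (m + n) n = qPochhammer Q (m + n) / (qPochhammer Q m * qPochhammer Q n) :=
  eq_div_of_mul_eq (mul_ne_zero (qPochhammer_ne_zero hQ m) (qPochhammer_ne_zero hQ n))
    (gaussBinom_mul_qPochhammer Q m n)

lemma norm_eval_C_le (x : 𝕜) (n : ℕ) : ‖(Chebyshev.C 𝕜 n).eval x‖ ≤ 2 * (‖x‖ + 1) ^ n := by
  have hx := norm_nonneg x
  induction n using Nat.twoStepInduction with
  | zero =>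
    have htwo : ‖(2 : 𝕜)‖ ≤ 2 := by
      simpa [one_add_one_eq_two] using norm_add_le (1 : 𝕜) 1
    simpa using htwo
  | one =>
    simp only [Nat.cast_one, Chebyshev.C_one, eval_X, pow_one]
    linarith
  | more n ih₀ ih₁ =>
    push_cast at ih₁ ⊢
    rw [Chebyshev.C_add_two, eval_sub, eval_mul, eval_X]
    calc ‖x * (Chebyshev.C 𝕜 (n + 1)).eval x - (Chebyshev.C 𝕜 n).eval x‖
        ≤ ‖x‖ * (2 * (‖x‖ + 1) ^ (n + 1)) + 2 * (‖x‖ + 1) ^ n := by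
          refine (norm_sub_le _ _).trans ?_
          rw [norm_mul]
          gcongr
      _ ≤ ‖x‖ * (2 * (‖x‖ + 1) ^ (n + 1)) + 2 * (‖x‖ + 1) ^ (n + 1) := by
          gcongr
          · linarith
          · lia
      _ = 2 * (‖x‖ + 1) ^ (n + 2) := by ring

lemma summable_pow_mul_pow_choose_two {K : Type*} [NormedField K] [CompleteSpace K] (r : K) {s : K}
    (hs : ‖s‖ < 1) : Summable fun n : ℕ ↦ r ^ n * s ^ (n + 1).choose 2 := by
  have hlim : Tendsto (fun n : ℕ ↦ ‖r * s ^ (n + 1)‖) atTop (𝓝 0) := by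
    simpa using (((tendsto_pow_atTop_nhds_zero_of_norm_lt_one hs).comp
      (tendsto_add_atTop_nat 1)).const_mul r).norm
  refine summable_of_ratio_norm_eventually_le (r := 1 / 2) (by norm_num) ?_
  filter_upwards [hlim.eventually_le_const (by norm_num : (0 : ℝ) < 1 / 2)] with n hn
  calc ‖r ^ (n + 1) * s ^ (n + 1 + 1).choose 2‖
      = ‖r * s ^ (n + 1)‖ * ‖r ^ n * s ^ (n + 1).choose 2‖ := by
        rw [Nat.choose_succ_succ' (n + 1) 1, Nat.choose_one_right, ← norm_mul]
        ring_nf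
    _ ≤ 1 / 2 * ‖r ^ n * s ^ (n + 1).choose 2‖ := by gcongr

lemma summable_norm_pow_choose_two_mul_eval_C (hQ : ‖Q‖ < 1) (x : 𝕜) :
    Summable fun n : ℕ ↦ ‖Q ^ (n + 1).choose 2 * (Chebyshev.C 𝕜 (2 * n + 1)).eval x‖ := by
  refine .of_nonneg_of_le (fun _ ↦ norm_nonneg _) (fun n ↦ ?_)
    ((summable_pow_mul_pow_choose_two ((‖x‖ + 1) ^ 2) (s := ‖Q‖) (by rwa [norm_norm])).mul_left
      (2 * (‖x‖ + 1)))
  calc ‖Q ^ (n + 1).choose 2 * (Chebyshev.C 𝕜 (2 * n + 1)).eval x‖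
      ≤ ‖Q‖ ^ (n + 1).choose 2 * (2 * (‖x‖ + 1) ^ (2 * n + 1)) := by
        rw [norm_mul, norm_pow]
        gcongr
        exact_mod_cast norm_eval_C_le x (2 * n + 1)
    _ = 2 * (‖x‖ + 1) * (((‖x‖ + 1) ^ 2) ^ n * ‖Q‖ ^ (n + 1).choose 2) := by
        rw [pow_succ, pow_mul]
        ring

variable [CompleteSpace 𝕜]

lemma multipliable_one_sub_pow_succ (hQ : ‖Q‖ < 1) : Multipliable fun n : ℕ ↦ 1 - Q ^ (n + 1) := by
  simpa only [sub_eq_add_neg] using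
    multipliable_one_add_of_summable (f := fun n : ℕ ↦ -Q ^ (n + 1))
      (by simpa only [norm_neg] using summable_norm_pow_succ hQ)

lemma tendsto_qPochhammer (hQ : ‖Q‖ < 1) :
    Tendsto (qPochhammer Q) atTop (𝓝 (∏' n : ℕ, (1 - Q ^ (n + 1)))) :=
  (multipliable_one_sub_pow_succ hQ).tendsto_prod_tprod_nat

lemma tprod_one_sub_pow_succ_ne_zero (hQ : ‖Q‖ < 1) : ∏' n : ℕ, (1 - Q ^ (n + 1)) ≠ 0 := by
  simpa only [sub_eq_add_neg] using
    tprod_one_add_ne_zero_of_summable (f := fun n : ℕ ↦ -Q ^ (n + 1))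
      (by simpa only [sub_eq_add_neg] using one_sub_pow_succ_ne_zero hQ)
      (by simpa only [norm_neg] using summable_norm_pow_succ hQ)

lemma tendsto_gaussBinom_add (hQ : ‖Q‖ < 1) :
    Tendsto (fun p : ℕ × ℕ ↦ gaussBinom Q (p.1 + p.2) p.2) atTop
      (𝓝 (∏' n : ℕ, (1 - Q ^ (n + 1)))⁻¹) := by
  have hL := tprod_one_sub_pow_succ_ne_zero hQ
  have hP := tendsto_qPochhammer hQ
  rw [← prod_atTop_atTop_eq]
  have hlim := (hP.comp (tendsto_fst.atTop_add_atTop tendsto_snd)).div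
    ((hP.comp tendsto_fst).mul (hP.comp tendsto_snd)) (mul_ne_zero hL hL)
  rw [div_mul_cancel_left₀ hL] at hlim
  exact hlim.congr fun p ↦ (gaussBinom_add_eq_div hQ p.1 p.2).symm

lemma exists_norm_gaussBinom_le (hQ : ‖Q‖ < 1) : ∃ B, ∀ n k, ‖gaussBinom Q n k‖ ≤ B := by
  have hP := tendsto_qPochhammer hQ
  obtain ⟨A, hA⟩ := hP.norm.bddAbove_range
  obtain ⟨B, hB⟩ := (hP.inv₀ (tprod_one_sub_pow_succ_ne_zero hQ)).norm.bddAbove_range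
  replace hA n : ‖qPochhammer Q n‖ ≤ A := hA ⟨n, rfl⟩
  replace hB n : ‖(qPochhammer Q n)⁻¹‖ ≤ B := hB ⟨n, rfl⟩
  have hA₀ : 0 ≤ A := (norm_nonneg _).trans (hA 0)
  have hB₀ : 0 ≤ B := (norm_nonneg _).trans (hB 0)
  refine ⟨A * (B * B), fun n k ↦ ?_⟩
  obtain hnk | hkn := lt_or_ge n k
  · rw [gaussBinom_eq_zero_of_lt Q hnk, norm_zero]
    positivity
  · obtain ⟨m, rfl⟩ := Nat.exists_eq_add_of_le' hkn
    rw [gaussBinom_add_eq_div hQ, div_eq_mul_inv, mul_inv, norm_mul, norm_mul]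
    gcongr <;> apply_rules

lemma tendsto_thetaCoeff (hQ : ‖Q‖ < 1) (n : ℕ) :
    Tendsto (fun N ↦ thetaCoeff Q N n) atTop
      (𝓝 ((∏' n : ℕ, (1 - Q ^ (n + 1)))⁻¹ * Q ^ (n + 1).choose 2)) := by
  have hpair : Tendsto (fun N : ℕ ↦ (N - n, N + 1 + n)) atTop atTop :=
    prod_atTop_atTop_eq (α := ℕ) (β := ℕ) ▸ (tendsto_sub_atTop_nat n).prodMk
      ((tendsto_add_atTop_nat n).comp (tendsto_add_atTop_nat 1))
  refine (((tendsto_gaussBinom_add hQ).comp hpair).mul_const _).congr' ?_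
  filter_upwards [eventually_ge_atTop n] with N hN
  rw [thetaCoeff, Function.comp_apply, show N - n + (N + 1 + n) = 2 * N + 1 by lia]

lemma hasProd_one_sub_sq_add (hQ : ‖Q‖ < 1) (y : 𝕜) :
    HasProd (fun n : ℕ ↦ (1 - Q ^ (n + 1)) ^ 2 + y * Q ^ (n + 1))
      ((∏' n : ℕ, (1 - Q ^ (n + 1))) ^ 2 *
        ∏' n : ℕ, (1 + Q ^ (n + 1) / (1 - Q ^ (n + 1)) ^ 2 * y)) := by
  have ha : Summable fun n : ℕ ↦ ‖Q ^ (n + 1) / (1 - Q ^ (n + 1)) ^ 2 * y‖ := by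
    simpa only [norm_mul] using (summable_norm_pow_succ_div_one_sub_sq hQ).mul_right ‖y‖
  refine (((multipliable_one_sub_pow_succ hQ).hasProd.pow 2).mul
    (multipliable_one_add_of_summable ha).hasProd).congr_fun fun n ↦ ?_
  have := one_sub_pow_succ_ne_zero hQ n
  field_simp

theorem tsum_pow_choose_two_mul_eval_C (hQ : ‖Q‖ < 1) (x : 𝕜) :
    ∑' n : ℕ, Q ^ (n + 1).choose 2 * (Chebyshev.C 𝕜 (2 * n + 1)).eval x =
      (∏' n : ℕ, (1 - Q ^ (n + 1))) *
        (x * ∏' n : ℕ, ((1 - Q ^ (n + 1)) ^ 2 + x ^ 2 * Q ^ (n + 1))) := by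
  set t : ℕ → 𝕜 := fun n ↦ (Chebyshev.C 𝕜 (2 * n + 1)).eval x
  set L := ∏' n : ℕ, (1 - Q ^ (n + 1))
  have hlim_series : Tendsto (fun N ↦ ∑' n, thetaCoeff Q N n * t n) atTop
      (𝓝 (∑' n, L⁻¹ * Q ^ (n + 1).choose 2 * t n)) := by
    obtain ⟨B, hB⟩ := exists_norm_gaussBinom_le hQ
    refine tendsto_tsum_of_dominated_convergence
      ((summable_norm_pow_choose_two_mul_eval_C hQ x).mul_left B)
      (fun n ↦ (tendsto_thetaCoeff hQ n).mul_const (t n)) (.of_forall fun N n ↦ ?_)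
    rw [thetaCoeff, mul_assoc, norm_mul]
    gcongr
    exact hB _ _
  have hlim_prod : Tendsto (fun N ↦ ∑' n, thetaCoeff Q N n * t n) atTop
      (𝓝 (x * ∏' n : ℕ, ((1 - Q ^ (n + 1)) ^ 2 + x ^ 2 * Q ^ (n + 1)))) := by
    have hprod := (hasProd_one_sub_sq_add hQ (x ^ 2)).multipliable.tendsto_prod_tprod_nat
    refine (hprod.const_mul x).congr fun N ↦ ?_
    rw [← sum_thetaCoeff_mul_eval_C Q x N.lt_succ_self, tsum_eq_sum]
    intro n hn
    rw [thetaCoeff_eq_zero_of_lt Q (by simpa using hn), zero_mul]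
  have hL₀ : L ≠ 0 := tprod_one_sub_pow_succ_ne_zero hQ
  simp only [mul_assoc, tsum_mul_left] at hlim_series
  rw [← tendsto_nhds_unique hlim_series hlim_prod, mul_inv_cancel_left₀ hL₀]

end Analysis

lemma hasSum_macA_mul_pow {q : ℂ} (hq : ‖q‖ < 1) (y : ℂ) :
    HasSum (fun k ↦ macA k q * y ^ k)
      (∏' n : ℕ, (1 + q ^ (n + 1) / (1 - q ^ (n + 1)) ^ 2 * y)) := by
  have hsum : Summable fun m : ℕ+ ↦ ‖q ^ (m : ℕ) / (1 - q ^ (m : ℕ)) ^ 2‖ :=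
    (summable_pnat_iff_summable_succ (f := fun m ↦ ‖q ^ m / (1 - q ^ m) ^ 2‖)).2
      (summable_norm_pow_succ_div_one_sub_sq hq)
  rw [← tprod_pnat_eq_tprod_succ (f := fun m ↦ 1 + q ^ m / (1 - q ^ m) ^ 2 * y)]
  simp only [macA_eq_tsum_powersetCard]
  exact hasSum_tsum_powersetCard_mul_pow hsum y

lemma two_mul_succ_choose_two (n : ℕ) : 2 * (n + 1).choose 2 = n ^ 2 + n := by
  rw [Nat.choose_two_right, Nat.mul_div_cancel' (Nat.even_mul_pred_self _).two_dvd,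
    Nat.add_sub_cancel]
  ring

lemma two_mul_eval_T_half (x : ℂ) (n : ℤ) :
    2 * (Chebyshev.T ℂ n).eval (x / 2) = (Chebyshev.C ℂ n).eval x := by
  have h := congrArg (eval (x / 2)) (Chebyshev.C_comp_two_mul_X ℂ n)
  simp only [eval_comp, eval_mul, eval_ofNat, eval_X] at h
  rw [← h, mul_div_cancel₀ x two_ne_zero]

theorem stmt0 (q x : ℂ) (hq : ‖q‖ < 1) :
    Summable (fun n : ℕ =>
      (Polynomial.Chebyshev.T ℂ (2 * (n : ℤ) + 1)).eval (x / 2) * q ^ (n ^ 2 + n)) ∧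
    Summable (fun k : ℕ => macA k (q ^ 2) * x ^ (2 * k + 1)) ∧
    2 * ∑' n : ℕ, (Polynomial.Chebyshev.T ℂ (2 * (n : ℤ) + 1)).eval (x / 2) * q ^ (n ^ 2 + n) =
      (∏' m : ℕ, (1 - q ^ (2 * (m + 1)))) ^ 3 *
        ∑' k : ℕ, macA k (q ^ 2) * x ^ (2 * k + 1) := by
  have hQ : ‖q ^ 2‖ < 1 := by
    rw [norm_pow]
    exact pow_lt_one₀ (norm_nonneg q) hq two_ne_zero
  have hterm (n : ℕ) : (Chebyshev.T ℂ (2 * (n : ℤ) + 1)).eval (x / 2) * q ^ (n ^ 2 + n) =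
      2⁻¹ * ((q ^ 2) ^ (n + 1).choose 2 * (Chebyshev.C ℂ (2 * n + 1)).eval x) := by
    rw [← pow_mul, two_mul_succ_choose_two, ← two_mul_eval_T_half]
    ring
  have hA : HasSum (fun k : ℕ ↦ macA k (q ^ 2) * x ^ (2 * k + 1)) _ :=
    ((hasSum_macA_mul_pow hQ (x ^ 2)).mul_left x).congr_fun fun k ↦ by ring
  simp only [hterm]
  refine ⟨(summable_norm_pow_choose_two_mul_eval_C hQ x).of_norm.mul_left _, hA.summable, ?_⟩
  simp only [pow_mul q 2]
  rw [tsum_mul_left, mul_inv_cancel_left₀ two_ne_zero, tsum_pow_choose_two_mul_eval_C hQ,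
    (hasProd_one_sub_sq_add hQ (x ^ 2)).tprod_eq, hA.tsum_eq]
  ring
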